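/- Let X and Y be real Banach spaces, let f : X → Y be a local C¹-diffeomorphism, let h : [0,∞) → [0,∞) be a continuous nondecreasing function with ∫₀^∞ dρ/(1+h(ρ)) = ∞, and for y ∈ Y set F_y(x) = ½‖f(x) − y‖². Then the following are equivalent: (i) for every y ∈ Y the functional F_y satisfies the weighted Chang Palais–Smale condition for h; (ii) for each y ∈ Y there is no sequence {x_n} with F_y(x_n) → c > 0 and λ_{F_y}(x_n)(1+h(‖x_n‖)) → 0, AND for each y ∈ Y every sequence {x_n} with F_y(x_n) → 0 and λ_{F_y}(x_n)(1+h(‖x_n‖)) → 0 has a strongly convergent subsequence. -/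

import Mathlib

/-!
Write `F_y u = ½‖f u - y‖²`. If (ii) holds, a sequence with `F_y (x n)` bounded has a subsequence
along which `F_y` converges to some `c ≥ 0`; the first half of (ii) excludes `c > 0` and the second
half gives a convergent subsequence when `c = 0`.

If (i) holds, only the first half of (ii) needs an argument. A sequence with `F_y (x n) → c > 0` and
`λ(x n)(1 + h ‖x n‖) → 0` has a subsequence converging to some `z`, and `f z ≠ y`. The direction
`v = -f'(z)⁻¹ (f z - y)` is a uniform descent direction for `F_y` near `z`
(`eventually_quotient_le`), so every `w ∈ ∂F_y(x)` with `x` near `z` has `w v ≤ -δ`, and `‖w‖` is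
bounded away from zero. Hence `λ` is bounded away from zero near `z` (`lambdaF_lower_bound`),
contradicting `λ(x n) → 0`. As `lambdaF` is a real infimum, equal to `0` on the empty set, this also
needs `∂F_y(x)` to be nonempty (`clarkeSubdiff_nonempty`): it contains `ξ ∘ f'(x)` for any
subgradient `ξ` of `½‖·‖²` at `f x - y`.
-/


open Filter Topology Set

noncomputable section

/-- Clarke generalized directional derivative of `F` at `x` in direction `v`. -/
def clarkeDeriv {X : Type*} [NormedAddCommGroup X] [NormedSpace ℝ X]
    (F : X → ℝ) (x v : X) : ℝ :=
  Filter.limsup (fun p : X × ℝ => (F (x + p.1 + p.2 • v) - F (x + p.1)) / p.2)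
    ((nhds (0 : X)) ×ˢ (nhdsWithin (0 : ℝ) (Set.Ioi 0)))

/-- Clarke generalized gradient of `F` at `x`. -/
def clarkeSubdiff {X : Type*} [NormedAddCommGroup X] [NormedSpace ℝ X]
    (F : X → ℝ) (x : X) : Set (X →L[ℝ] ℝ) :=
  {w | ∀ v, w v ≤ clarkeDeriv F x v}

/-- `λ_F(x) = min_{w* ∈ ∂F(x)} ‖w*‖`. -/
def lambdaF {X : Type*} [NormedAddCommGroup X] [NormedSpace ℝ X]
    (F : X → ℝ) (x : X) : ℝ :=
  sInf ((fun w : X →L[ℝ] ℝ => ‖w‖) '' clarkeSubdiff F x)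

/-- The weighted Chang Palais–Smale condition for the weight `h`. -/
def WeightedChangPS {X : Type*} [NormedAddCommGroup X] [NormedSpace ℝ X]
    (F : X → ℝ) (h : ℝ → ℝ) : Prop :=
  ∀ x : ℕ → X, (∃ C : ℝ, ∀ n, |F (x n)| ≤ C) →
    Filter.Tendsto (fun n => lambdaF F (x n) * (1 + h ‖x n‖)) Filter.atTop (nhds 0) →
    ∃ (z : X) (φ : ℕ → ℕ), StrictMono φ ∧
      Filter.Tendsto (fun n => x (φ n)) Filter.atTop (nhds z)

/-- The Banach constant `Sur A = inf_{‖v*‖=1} ‖A* v*‖`. -/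
def surBanach {X Y : Type*} [NormedAddCommGroup X] [NormedSpace ℝ X]
    [NormedAddCommGroup Y] [NormedSpace ℝ Y] (A : X →L[ℝ] Y) : ℝ :=
  sInf ((fun v : Y →L[ℝ] ℝ => ‖v.comp A‖) '' {v : Y →L[ℝ] ℝ | ‖v‖ = 1})

/-- Norm-coercivity: `‖f x‖ → ∞` as `‖x‖ → ∞`. -/
def NormCoercive {X Y : Type*} [NormedAddCommGroup X] [NormedAddCommGroup Y]
    (f : X → Y) : Prop :=
  Filter.Tendsto (fun x => ‖f x‖) (Filter.comap (fun x : X => ‖x‖) Filter.atTop) Filter.atTop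

section Aux

variable {X Y : Type*} [NormedAddCommGroup X] [NormedSpace ℝ X]
  [NormedAddCommGroup Y] [NormedSpace ℝ Y]

/-- Strict differentiability gives convergence of difference quotients with moving base point. -/
lemma tendsto_diffQuot {f : X → Y} {A : X →L[ℝ] Y} {x : X} (hf : HasStrictFDerivAt f A x) (v : X) :
    Tendsto (fun p : X × ℝ => p.2⁻¹ • (f (p.1 + p.2 • v) - f p.1)) (𝓝 x ×ˢ 𝓝[>] (0 : ℝ))
      (𝓝 (A v)) := by
  have h1 : Tendsto (fun p : X × ℝ => p.1) (𝓝 x ×ˢ 𝓝[>] (0 : ℝ)) (𝓝 x) := tendsto_fst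
  have h2 : Tendsto (fun p : X × ℝ => p.2) (𝓝 x ×ˢ 𝓝[>] (0 : ℝ)) (𝓝 0) :=
    tendsto_snd.mono_right nhdsWithin_le_nhds
  have h3 : Tendsto (fun p : X × ℝ => (p.1 + p.2 • v, p.1)) (𝓝 x ×ˢ 𝓝[>] (0 : ℝ))
      (𝓝 (x, x)) := by
    rw [nhds_prod_eq]
    refine Tendsto.prodMk ?_ h1
    simpa using h1.add (h2.smul_const v)
  have h4 := hf.isLittleO.comp_tendsto h3
  have h5 : (fun p : X × ℝ => f (p.1 + p.2 • v) - f p.1 - A (p.2 • v))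
      =o[𝓝 x ×ˢ 𝓝[>] (0 : ℝ)] (fun p : X × ℝ => p.2) := by
    refine Asymptotics.IsLittleO.trans_isBigO (g := fun p : X × ℝ => p.2 • v) ?_ ?_
    · simpa [Function.comp_def] using h4
    · refine Asymptotics.IsBigO.of_bound ‖v‖ (Eventually.of_forall fun p => ?_)
      rw [norm_smul, mul_comm]
  have h6 := h5.tendsto_inv_smul_nhds_zero
  have h7 := h6.add_const (A v)
  rw [zero_add] at h7
  refine h7.congr' ?_
  have hpos : ∀ᶠ p : X × ℝ in 𝓝 x ×ˢ 𝓝[>] (0 : ℝ), 0 < p.2 :=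
    tendsto_snd.eventually self_mem_nhdsWithin
  filter_upwards [hpos] with p hp
  rw [map_smul, smul_sub, smul_smul, inv_mul_cancel₀ hp.ne', one_smul, sub_add_cancel]

/-- The difference quotients of `½‖f · - y‖²` are bounded near the base point, so that the real
`limsup` in `clarkeDeriv` takes no junk value. -/
lemma exists_quotient_bound {f : X → Y} {A : X →L[ℝ] Y} {x : X} (hf : HasStrictFDerivAt f A x)
    (y : Y) (v : X) :
    ∃ C : ℝ, ∀ᶠ p : X × ℝ in 𝓝 (0 : X) ×ˢ 𝓝[>] (0 : ℝ),
      |((1/2 : ℝ) * ‖f (x + p.1 + p.2 • v) - y‖ ^ 2 - (1/2 : ℝ) * ‖f (x + p.1) - y‖ ^ 2) / p.2|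
        ≤ C := by
  have hsh : Tendsto (fun p : X × ℝ => (x + p.1, p.2)) (𝓝 (0 : X) ×ˢ 𝓝[>] (0 : ℝ))
      (𝓝 x ×ˢ 𝓝[>] (0 : ℝ)) := by
    refine Tendsto.prodMk ?_ tendsto_snd
    simpa using (tendsto_const_nhds (x := x)).add
      (tendsto_fst (f := 𝓝 (0 : X)) (g := 𝓝[>] (0 : ℝ)))
  have h1 : Tendsto (fun p : X × ℝ => x + p.1) (𝓝 (0 : X) ×ˢ 𝓝[>] (0 : ℝ)) (𝓝 x) :=
    tendsto_fst.comp hsh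
  have h2 : Tendsto (fun p : X × ℝ => p.2) (𝓝 (0 : X) ×ˢ 𝓝[>] (0 : ℝ)) (𝓝 0) :=
    tendsto_snd.mono_right nhdsWithin_le_nhds
  have h3 : Tendsto (fun p : X × ℝ => x + p.1 + p.2 • v) (𝓝 (0 : X) ×ˢ 𝓝[>] (0 : ℝ)) (𝓝 x) := by
    simpa using h1.add (h2.smul_const v)
  have hc := hf.continuousAt
  have hD := ((tendsto_diffQuot hf v).comp hsh).norm
  have ha := ((hc.tendsto.comp h3).sub_const y).norm
  have hb := ((hc.tendsto.comp h1).sub_const y).norm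
  have hlim := ((ha.add hb).const_mul (1/2 : ℝ)).mul hD
  have hev := hlim.eventually_le_const (lt_add_one _)
  refine ⟨1/2 * (‖f x - y‖ + ‖f x - y‖) * ‖A v‖ + 1, ?_⟩
  have hpos : ∀ᶠ p : X × ℝ in 𝓝 (0 : X) ×ˢ 𝓝[>] (0 : ℝ), 0 < p.2 :=
    tendsto_snd.eventually self_mem_nhdsWithin
  filter_upwards [hev, hpos] with p hp hp2
  refine le_trans ?_ hp
  simp only [Function.comp_apply]
  rw [norm_smul, norm_inv, Real.norm_eq_abs, abs_div, abs_of_pos hp2, div_eq_inv_mul]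
  have hd : |‖f (x + p.1 + p.2 • v) - y‖ - ‖f (x + p.1) - y‖|
      ≤ ‖f (x + p.1 + p.2 • v) - f (x + p.1)‖ := by
    simpa using abs_norm_sub_norm_le (f (x + p.1 + p.2 • v) - y) (f (x + p.1) - y)
  set a := ‖f (x + p.1 + p.2 • v) - y‖
  set b := ‖f (x + p.1) - y‖
  have hab : 0 ≤ 1 / 2 * (a + b) := by positivity
  have : (1/2 : ℝ) * a ^ 2 - 1/2 * b ^ 2 = 1/2 * (a + b) * (a - b) := by ring
  rw [this, abs_mul, abs_of_nonneg hab, mul_left_comm]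
  gcongr

/-- The Clarke gradient contains `ξ ∘ f'(x)`, where `ξ` is a subgradient of `½‖·‖²` at `f x - y`. -/
lemma clarkeSubdiff_nonempty {f : X → Y} {A : X →L[ℝ] Y} {x : X} (hf : HasStrictFDerivAt f A x)
    (y : Y) : (clarkeSubdiff (fun u => (1/2 : ℝ) * ‖f u - y‖ ^ 2) x).Nonempty := by
  obtain ⟨g, hg1, hg2⟩ := exists_dual_vector'' ℝ (f x - y)
  simp only [RCLike.ofReal_real_eq_id, id_eq] at hg2
  refine ⟨(‖f x - y‖ • g).comp A, fun v => ?_⟩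
  by_contra! hlt
  obtain ⟨a, ha1, ha2⟩ := exists_between hlt
  obtain ⟨C, hC⟩ := exists_quotient_bound hf y v
  have hbd : IsBoundedUnder (· ≤ ·) (𝓝 (0 : X) ×ˢ 𝓝[>] (0 : ℝ)) (fun p : X × ℝ =>
      ((1/2 : ℝ) * ‖f (x + p.1 + p.2 • v) - y‖ ^ 2 - (1/2 : ℝ) * ‖f (x + p.1) - y‖ ^ 2) / p.2) :=
    ⟨C, eventually_map.2 (hC.mono fun p hp => (abs_le.1 hp).2)⟩
  have hev := eventually_lt_of_limsup_lt ha1 hbd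
  -- Restrict to the unshifted quotients, that is, to base point `x` itself.
  have hz : Tendsto (fun t : ℝ => ((0 : X), t)) (𝓝[>] (0 : ℝ)) (𝓝 (0 : X) ×ˢ 𝓝[>] (0 : ℝ)) :=
    tendsto_const_nhds.prodMk tendsto_id
  have hx : Tendsto (fun t : ℝ => (x, t)) (𝓝[>] (0 : ℝ)) (𝓝 x ×ˢ 𝓝[>] (0 : ℝ)) :=
    tendsto_const_nhds.prodMk tendsto_id
  have hD := ((‖f x - y‖ • g).continuous.tendsto _).comp ((tendsto_diffQuot hf v).comp hx)
  have hgt := hD.eventually_const_lt ha2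
  obtain ⟨t, ht1, ht2, ht⟩ :=
    ((hz.eventually hev).and (hgt.and (self_mem_nhdsWithin : Ioi (0 : ℝ) ∈ 𝓝[>] 0))).exists
  have ht : 0 < t := ht
  simp only [Function.comp_apply, map_smul, add_zero, smul_eq_mul, _root_.smul_apply]
    at ht1 ht2
  have hlt := ht2.trans' ht1
  rw [div_eq_inv_mul] at hlt
  have hlt := lt_of_mul_lt_mul_left hlt (by positivity)
  have hgk : g (f (x + t • v) - f x) ≤ ‖f (x + t • v) - y‖ - ‖f x - y‖ := by
    have e : f (x + t • v) - f x = (f (x + t • v) - y) - (f x - y) := by abel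
    rw [e, map_sub, hg2]
    have := (le_abs_self _).trans (g.le_of_opNorm_le hg1 (f (x + t • v) - y))
    linarith
  have := mul_le_mul_of_nonneg_left hgk (norm_nonneg (f x - y))
  nlinarith [sq_nonneg (‖f (x + t • v) - y‖ - ‖f x - y‖)]

/-- If `f'(z) v = -(f z - y)`, then `v` is a descent direction for `½‖f · - y‖²`, uniformly for
base points near `z`. -/
lemma eventually_quotient_le {f : X → Y} {A : X →L[ℝ] Y} {z : X} (hf : HasStrictFDerivAt f A z)
    {y : Y} (hy : f z ≠ y) {v : X} (hv : A v = -(f z - y)) :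
    ∀ᶠ p : X × ℝ in 𝓝 z ×ˢ 𝓝[>] (0 : ℝ),
      ((1/2 : ℝ) * ‖f (p.1 + p.2 • v) - y‖ ^ 2 - (1/2 : ℝ) * ‖f p.1 - y‖ ^ 2) / p.2
        ≤ -(‖f z - y‖ ^ 2 / 16) := by
  have hu : 0 < ‖f z - y‖ := norm_pos_iff.2 (sub_ne_zero.2 hy)
  have hs := (hf.continuousAt.tendsto.comp
    (tendsto_fst (f := 𝓝 z) (g := 𝓝[>] (0 : ℝ)))).sub_const y
  have hsn := hs.norm.eventually_const_lt (half_lt_self hu)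
  have he := ((tendsto_diffQuot hf v).add hs).norm
  rw [hv, neg_add_cancel, norm_zero] at he
  have hen := he.eventually_lt_const (show 0 < ‖f z - y‖ / 4 by positivity)
  have hpos : ∀ᶠ p : X × ℝ in 𝓝 z ×ˢ 𝓝[>] (0 : ℝ), p.2 ∈ Ioo (0 : ℝ) 1 :=
    tendsto_snd.eventually (Ioo_mem_nhdsGT one_pos)
  filter_upwards [hsn, hen, hpos] with p hp1 hp2 ⟨ht0, ht1⟩
  simp only [Function.comp_apply] at hp1 hp2
  set D := p.2⁻¹ • (f (p.1 + p.2 • v) - f p.1) with hD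
  have hfd : f (p.1 + p.2 • v) - y = (1 - p.2) • (f p.1 - y) + p.2 • (D + (f p.1 - y)) := by
    rw [smul_add, hD, smul_smul, mul_inv_cancel₀ ht0.ne', one_smul, sub_smul, one_smul]
    abel
  have hr : ‖f (p.1 + p.2 • v) - y‖
      ≤ (1 - p.2) * ‖f p.1 - y‖ + p.2 * ‖D + (f p.1 - y)‖ := by
    rw [hfd]
    refine (norm_add_le _ _).trans ?_
    rw [norm_smul, norm_smul, Real.norm_of_nonneg ht0.le, Real.norm_of_nonneg (by linarith)]
  have hr0 := norm_nonneg (f (p.1 + p.2 • v) - y)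
  generalize ‖f (p.1 + p.2 • v) - y‖ = r at *
  generalize ‖f p.1 - y‖ = s at *
  generalize ‖D + (f p.1 - y)‖ = e at *
  generalize ‖f z - y‖ = u at *
  generalize p.2 = t at *
  have hr2 : r ≤ (1 - t / 2) * s := by nlinarith
  have hr3 : r ^ 2 ≤ ((1 - t / 2) * s) ^ 2 := pow_le_pow_left₀ hr0 hr2 2
  have hus : u ^ 2 ≤ 4 * s ^ 2 := by nlinarith
  rw [div_le_iff₀ ht0]
  have h1 : t * u ^ 2 ≤ t * (4 * s ^ 2) := mul_le_mul_of_nonneg_left hus ht0.le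
  have h2 : t ^ 2 * s ^ 2 ≤ t * s ^ 2 :=
    mul_le_mul_of_nonneg_right (by nlinarith) (sq_nonneg s)
  nlinarith

lemma lambdaF_lower_bound {f : X → Y} {A : X → X ≃L[ℝ] Y}
    (hf : ∀ x, HasStrictFDerivAt f (A x : X →L[ℝ] Y) x) {y : Y} {z : X} (hy : f z ≠ y) :
    ∃ δ > 0, ∀ᶠ x in 𝓝 z, δ ≤ lambdaF (fun u => (1/2 : ℝ) * ‖f u - y‖ ^ 2) x := by
  have hu : 0 < ‖f z - y‖ := norm_pos_iff.2 (sub_ne_zero.2 hy)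
  set v : X := (A z).symm (-(f z - y)) with hv
  have hq := eventually_quotient_le (hf z) hy (v := v) (by simp [hv])
  refine ⟨‖f z - y‖ ^ 2 / 16 / (‖v‖ + 1), by positivity, ?_⟩
  obtain ⟨P, hP, Q, hQ, hPQ⟩ := eventually_prod_iff.1 hq
  filter_upwards [eventually_eventually_nhds.2 hP] with x hx
  refine le_csInf ((clarkeSubdiff_nonempty (hf x) y).image _) ?_
  rintro _ ⟨w, hw, rfl⟩
  have hle : clarkeDeriv (fun u => (1/2 : ℝ) * ‖f u - y‖ ^ 2) x v ≤ -(‖f z - y‖ ^ 2 / 16) := by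
    obtain ⟨C, hC⟩ := exists_quotient_bound (hf x) y v
    refine limsup_le_of_le ?_ ?_
    · exact IsBoundedUnder.isCoboundedUnder_le
        ⟨-C, eventually_map.2 (hC.mono fun p hp => (abs_le.1 hp).1)⟩
    · have ht : Tendsto (fun k : X => x + k) (𝓝 0) (𝓝 x) := by
        simpa using (continuous_const_add x).tendsto (0 : X)
      exact ((ht.eventually hx).prod_mk hQ).mono fun p hp => hPQ hp.1 hp.2
  have h1 := (hw v).trans hle
  have h2 := (neg_le_abs (w v)).trans (w.le_opNorm v)
  rw [div_le_iff₀ (by positivity)]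
  nlinarith [norm_nonneg w]

end Aux

theorem star_iff_dagger_and_ddagger {X Y : Type*} [NormedAddCommGroup X] [NormedSpace ℝ X] [CompleteSpace X]
    [NormedAddCommGroup Y] [NormedSpace ℝ Y] [CompleteSpace Y]
    (f : X → Y) (f' : X → X ≃L[ℝ] Y)
    (hC1 : ContDiff ℝ 1 f)
    (hdf : ∀ x : X, HasFDerivAt f (f' x : X →L[ℝ] Y) x)
    (h : ℝ → ℝ)
    (hcont : ContinuousOn h (Set.Ici 0))
    (hmono : MonotoneOn h (Set.Ici 0))
    (hnonneg : ∀ t ∈ Set.Ici (0:ℝ), 0 ≤ h t)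
    (hint : ∫⁻ ρ in Set.Ioi (0:ℝ), ENNReal.ofReal (1 / (1 + h ρ)) = ⊤) :
    (∀ y : Y, WeightedChangPS (fun u => (1/2 : ℝ) * ‖f u - y‖ ^ 2) h) ↔
      ((∀ y : Y, ¬ ∃ (x : ℕ → X) (c : ℝ), 0 < c ∧
        Filter.Tendsto (fun n => (1/2 : ℝ) * ‖f (x n) - y‖ ^ 2) Filter.atTop (nhds c) ∧
        Filter.Tendsto
          (fun n => lambdaF (fun u => (1/2 : ℝ) * ‖f u - y‖ ^ 2) (x n) * (1 + h ‖x n‖))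
          Filter.atTop (nhds 0)) ∧
      (∀ y : Y, ∀ x : ℕ → X,
        Filter.Tendsto (fun n => (1/2 : ℝ) * ‖f (x n) - y‖ ^ 2) Filter.atTop (nhds 0) →
        Filter.Tendsto
          (fun n => lambdaF (fun u => (1/2 : ℝ) * ‖f u - y‖ ^ 2) (x n) * (1 + h ‖x n‖))
          Filter.atTop (nhds 0) →
        ∃ (z : X) (φ : ℕ → ℕ), StrictMono φ ∧
          Filter.Tendsto (fun n => x (φ n)) Filter.atTop (nhds z))) := by

  have hs : ∀ x, HasStrictFDerivAt f (f' x : X →L[ℝ] Y) x := fun x =>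
    hC1.contDiffAt.hasStrictFDerivAt' (hdf x) one_ne_zero
  have hcf : Continuous f := hC1.continuous
  constructor
  · intro H
    refine ⟨?_, ?_⟩
    · rintro y ⟨x, c, hc, hF, hl⟩
      have hbd : ∃ C : ℝ, ∀ n, |(1/2 : ℝ) * ‖f (x n) - y‖ ^ 2| ≤ C := by
        obtain ⟨C, hC⟩ := hF.abs.bddAbove_range
        exact ⟨C, fun n => hC ⟨n, rfl⟩⟩
      obtain ⟨z, φ, hφ, hz⟩ := H y x hbd hl
      have hFz : Tendsto (fun n => (1/2 : ℝ) * ‖f (x (φ n)) - y‖ ^ 2) atTop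
          (𝓝 ((1/2 : ℝ) * ‖f z - y‖ ^ 2)) :=
        ((((hcf.tendsto z).comp hz).sub_const y).norm.pow 2).const_mul _
      have hcz := tendsto_nhds_unique hFz (hF.comp hφ.tendsto_atTop)
      have hy : f z ≠ y := by
        rintro rfl
        simp at hcz
        exact hc.ne hcz
      obtain ⟨δ, hδ, hev⟩ := lambdaF_lower_bound hs hy
      have h1 := (hl.comp hφ.tendsto_atTop).eventually_lt_const hδ
      obtain ⟨n, hn1, hn2⟩ := (h1.and (hz.eventually hev)).exists
      have hh := hnonneg ‖x (φ n)‖ (norm_nonneg _)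
      simp only [Function.comp_apply] at hn1
      nlinarith [mul_nonneg (hδ.le.trans hn2) hh]
    · intro y x hF hl
      obtain ⟨C, hC⟩ := hF.abs.bddAbove_range
      exact H y x ⟨C, fun n => hC ⟨n, rfl⟩⟩ hl
  · rintro ⟨H1, H2⟩ y x ⟨C, hC⟩ hl
    obtain ⟨c, -, φ, hφ, hc⟩ := tendsto_subseq_of_bounded (Metric.isBounded_Icc (-C) C)
      (x := fun n => (1/2 : ℝ) * ‖f (x n) - y‖ ^ 2) (fun n => abs_le.1 (hC n))
    have hl' := hl.comp hφ.tendsto_atTop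
    have hc0 : 0 ≤ c := ge_of_tendsto' hc fun n => by
      simp only [Function.comp_apply]
      positivity
    rcases hc0.eq_or_lt with rfl | hpos
    · obtain ⟨z, ψ, hψ, hz⟩ := H2 y (fun n => x (φ n)) hc hl'
      exact ⟨z, fun n => φ (ψ n), hφ.comp hψ, hz⟩
    · exact (H1 y ⟨fun n => x (φ n), c, hpos, hc, hl'⟩).elim
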